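/- For every n ≥ 3 and every integer k (with the convention D_{m,j}^* = 0 for j < 0): D_{n,k}^{0,≥2} = 2k·D_{n-1,k}^{0,≥2} + (2n-2k-1)·D_{n-1,k-1}^{0,≥2} + D_{n-1,k-1}^1 + D_{n-1,k}^{0,1} + D_{n-1,k-1}^{≥2}. -/

import Mathlib

/-- A signed permutation of `{1,…,n}`, encoded as an (unsigned) permutation of
`Fin n` together with a choice of sign for each position.  The associated
word is `π_1 π_2 ⋯ π_n` where `π_j = ± σ(j)`. -/
abbrev SignedPerm (n : ℕ) := Equiv.Perm (Fin n) × (Fin n → Bool)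

namespace SignedPerm

/-- The letter `π_j` of the word of `p`, for `1 ≤ j ≤ n` (and `0` otherwise). -/
def word {n : ℕ} (p : SignedPerm n) (j : ℕ) : ℤ :=
  if h : 1 ≤ j ∧ j ≤ n then
    (if p.2 ⟨j - 1, by omega⟩ then -1 else 1) * ((p.1 ⟨j - 1, by omega⟩ : ℕ) + 1)
  else 0

/-- The letter `π_j`, with the type `D` convention `π_0 = -π_2`. -/
def entry {n : ℕ} (p : SignedPerm n) (j : ℕ) : ℤ :=
  if j = 0 then -(p.word 2) else p.word j

/-- The set of `D`-descents of `p`: those `i ∈ {0,…,n-1}` with `π_i > π_{i+1}`. -/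
def ddes {n : ℕ} (p : SignedPerm n) : Finset ℕ :=
  (Finset.range n).filter fun i => p.entry (i + 1) < p.entry i

/-- The number of `D`-descents of `p`. -/
def d {n : ℕ} (p : SignedPerm n) : ℕ := p.ddes.card

/-- Membership in the type `D` Coxeter group `D_n ⊆ B_n`:
the number of negative letters is even. -/
def inD {n : ℕ} (p : SignedPerm n) : Prop :=
  Even (Finset.univ.filter (fun i => p.2 i = true)).card

/-- Type '1': descent at position `1` but not at `0`. -/
def type1 {n : ℕ} (p : SignedPerm n) : Prop := 1 ∈ p.ddes ∧ 0 ∉ p.ddes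

/-- Type '0,1': descents at both positions `0` and `1`. -/
def type01 {n : ℕ} (p : SignedPerm n) : Prop := 0 ∈ p.ddes ∧ 1 ∈ p.ddes

/-- Type '≥2': no descent at positions `0` and `1`. -/
def typeGe2 {n : ℕ} (p : SignedPerm n) : Prop := 0 ∉ p.ddes ∧ 1 ∉ p.ddes

/-- Type '0,≥2': descent at position `0` but not at `1`. -/
def type0Ge2 {n : ℕ} (p : SignedPerm n) : Prop := 0 ∈ p.ddes ∧ 1 ∉ p.ddes

instance {n : ℕ} (p : SignedPerm n) : Decidable p.inD := by
  unfold SignedPerm.inD; infer_instance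
instance {n : ℕ} (p : SignedPerm n) : Decidable p.type1 := by
  unfold SignedPerm.type1; infer_instance
instance {n : ℕ} (p : SignedPerm n) : Decidable p.type01 := by
  unfold SignedPerm.type01; infer_instance
instance {n : ℕ} (p : SignedPerm n) : Decidable p.typeGe2 := by
  unfold SignedPerm.typeGe2; infer_instance
instance {n : ℕ} (p : SignedPerm n) : Decidable p.type0Ge2 := by
  unfold SignedPerm.type0Ge2; infer_instance

end SignedPerm

/-- The type `D` Eulerian number `D_{n,k}`: the number of elements of `D_n`
with exactly `k` `D`-descents (zero for `k < 0`). -/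
def eulerD (n : ℕ) (k : ℤ) : ℕ :=
  (Finset.univ.filter fun p : SignedPerm n => p.inD ∧ (p.d : ℤ) = k).card

/-- The sub-Eulerian number `D_{n,k}^1`. -/
def subEuler1 (n : ℕ) (k : ℤ) : ℕ :=
  (Finset.univ.filter fun p : SignedPerm n => p.inD ∧ p.type1 ∧ (p.d : ℤ) = k).card

/-- The sub-Eulerian number `D_{n,k}^{0,1}`. -/
def subEuler01 (n : ℕ) (k : ℤ) : ℕ :=
  (Finset.univ.filter fun p : SignedPerm n => p.inD ∧ p.type01 ∧ (p.d : ℤ) = k).card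

/-- The sub-Eulerian number `D_{n,k}^{≥2}`. -/
def subEulerGe2 (n : ℕ) (k : ℤ) : ℕ :=
  (Finset.univ.filter fun p : SignedPerm n => p.inD ∧ p.typeGe2 ∧ (p.d : ℤ) = k).card

/-- The sub-Eulerian number `D_{n,k}^{0,≥2}`. -/
def subEuler0Ge2 (n : ℕ) (k : ℤ) : ℕ :=
  (Finset.univ.filter fun p : SignedPerm n => p.inD ∧ p.type0Ge2 ∧ (p.d : ℤ) = k).card

/-- The type `D` Eulerian polynomial `D_n(t) = Σ_{π ∈ D_n} t^{d(π)}`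
(with `D_0(t) = D_1(t) = 1`). -/
noncomputable def polyD (n : ℕ) : Polynomial ℚ :=
  ∑ p ∈ Finset.univ.filter (fun p : SignedPerm n => p.inD), Polynomial.X ^ p.d

/-- The sub-Eulerian polynomial `D_n^1(t)`. -/
noncomputable def polyD1 (n : ℕ) : Polynomial ℚ :=
  ∑ p ∈ Finset.univ.filter (fun p : SignedPerm n => p.inD ∧ p.type1), Polynomial.X ^ p.d

/-- The sub-Eulerian polynomial `D_n^{0,1}(t)`. -/
noncomputable def polyD01 (n : ℕ) : Polynomial ℚ :=
  ∑ p ∈ Finset.univ.filter (fun p : SignedPerm n => p.inD ∧ p.type01), Polynomial.X ^ p.d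

/-- The sub-Eulerian polynomial `D_n^{≥2}(t)`. -/
noncomputable def polyDGe2 (n : ℕ) : Polynomial ℚ :=
  ∑ p ∈ Finset.univ.filter (fun p : SignedPerm n => p.inD ∧ p.typeGe2), Polynomial.X ^ p.d

/-- The sub-Eulerian polynomial `D_n^{0,≥2}(t)`. -/
noncomputable def polyD0Ge2 (n : ℕ) : Polynomial ℚ :=
  ∑ p ∈ Finset.univ.filter (fun p : SignedPerm n => p.inD ∧ p.type0Ge2), Polynomial.X ^ p.d

namespace SignedPerm

/-- descent indicator -/
def des {n : ℕ} (p : SignedPerm n) (t : ℕ) : ℤ := if p.entry (t + 1) < p.entry t then 1 else 0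

lemma d_eq_sum {n : ℕ} (p : SignedPerm n) : (p.d : ℤ) = ∑ t ∈ Finset.range n, p.des t := by
  simp [d, ddes, des]

lemma mem_ddes {n : ℕ} (p : SignedPerm n) (t : ℕ) : t ∈ p.ddes ↔ t < n ∧ p.des t = 1 := by
  simp [ddes, des]

lemma word_succ {n : ℕ} (p : SignedPerm n) (j : ℕ) (h : j < n) :
    p.word (j + 1) = (if p.2 ⟨j, h⟩ then -1 else 1) * ((p.1 ⟨j, h⟩ : ℕ) + 1) := by
  have : 1 ≤ j + 1 ∧ j + 1 ≤ n := by omega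
  simp only [word, dif_pos this, Nat.add_sub_cancel]

lemma natAbs_word {n : ℕ} (p : SignedPerm n) (j : ℕ) (h : j < n) :
    (p.word (j + 1)).natAbs = (p.1 ⟨j, h⟩ : ℕ) + 1 := by
  rw [word_succ p j h]; split_ifs <;> omega

lemma natAbs_entry_ne {n : ℕ} (hn : 2 ≤ n) (p : SignedPerm n) (t : ℕ) (h : t < n) :
    (p.entry (t + 1)).natAbs ≠ (p.entry t).natAbs ∧ p.entry t ≠ 0 ∧ p.entry (t + 1) ≠ 0 := by
  rcases t with _ | t
  · simp only [entry]
    have h1 := natAbs_word p 0 (by omega)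
    have h2 := natAbs_word p 1 (by omega)
    have h3 : (p.1 ⟨0, by omega⟩ : ℕ) ≠ p.1 ⟨1, by omega⟩ := by
      intro h; have := p.1.injective (Fin.ext h); simp at this
    simp at h1 h2 ⊢
    omega
  · simp only [entry]
    have h1 := natAbs_word p t (by omega)
    have h2 := natAbs_word p (t+1) (by omega)
    have h3 : (p.1 ⟨t, by omega⟩ : ℕ) ≠ p.1 ⟨t+1, by omega⟩ := by
      intro h; have := p.1.injective (Fin.ext h); simp at this
    simp at h1 h2 ⊢
    omega

/-- flip the sign of the letter of absolute value one -/
def flip {m : ℕ} (p : SignedPerm (m+1)) : SignedPerm (m+1) :=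
  (p.1, Function.update p.2 (p.1.symm 0) (!(p.2 (p.1.symm 0))))

lemma flip_flip {m : ℕ} (p : SignedPerm (m+1)) : p.flip.flip = p := by
  rcases p with ⟨σ, s⟩
  simp [flip]

lemma flip_fst {m : ℕ} (p : SignedPerm (m+1)) : p.flip.1 = p.1 := rfl

lemma flip_snd_self {m : ℕ} (p : SignedPerm (m+1)) :
    p.flip.2 (p.1.symm 0) = !(p.2 (p.1.symm 0)) := by simp [flip]

lemma flip_snd_ne {m : ℕ} (p : SignedPerm (m+1)) (i) (h : i ≠ p.1.symm 0) :
    p.flip.2 i = p.2 i := by simp [flip, h]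

lemma flip_word {m : ℕ} (p : SignedPerm (m+1)) (j : ℕ) :
    p.flip.word j = if (p.word j).natAbs = 1 then - p.word j else p.word j := by
  by_cases h : 1 ≤ j ∧ j ≤ m + 1
  · obtain ⟨j, rfl⟩ : ∃ i, j = i + 1 := ⟨j - 1, by omega⟩
    have hj : j < m + 1 := by omega
    rw [natAbs_word p j hj, word_succ _ j hj, word_succ _ j hj]
    rw [flip_fst]
    by_cases h0 : p.1 ⟨j, hj⟩ = 0
    · have : p.1.symm 0 = ⟨j, hj⟩ := by rw [← h0]; simp
      have h3 := flip_snd_self p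
      rw [this] at h3
      rw [h3, h0]
      cases p.2 ⟨j, hj⟩ <;> simp
    · have h1 : (⟨j, hj⟩ : Fin (m+1)) ≠ p.1.symm 0 := by
        intro h; apply h0; rw [h]; simp
      have h2 : (p.1 ⟨j, hj⟩ : ℕ) ≠ 0 := fun h => h0 (Fin.ext h)
      have h4 : ¬ ((p.1 ⟨j, hj⟩ : ℕ) + 1 = 1) := by omega
      rw [flip_snd_ne p _ h1, if_neg h4]
  · simp [word, h]

lemma flip_entry {m : ℕ} (p : SignedPerm (m+1)) (j : ℕ) :
    p.flip.entry j = if (p.entry j).natAbs = 1 then - p.entry j else p.entry j := by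
  unfold entry
  split_ifs <;> rw [flip_word] <;> simp_all

lemma flip_ddes {m : ℕ} (hm : 1 ≤ m) (p : SignedPerm (m+1)) : p.flip.ddes = p.ddes := by
  unfold ddes
  apply Finset.filter_congr
  intro t ht
  have := natAbs_entry_ne (by omega) p t (by simpa using ht)
  rw [flip_entry, flip_entry]
  split_ifs <;> omega

lemma flip_inD {m : ℕ} (p : SignedPerm (m+1)) : p.flip.inD ↔ ¬ p.inD := by
  unfold inD
  set a := p.1.symm 0 with ha
  have key : ∀ s : Fin (m+1) → Bool, (Finset.univ.filter (fun i => s i = true)).card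
      = (if s a then 1 else 0) + ∑ i ∈ Finset.univ.erase a, (if s i then 1 else 0) := by
    intro s
    rw [Finset.card_filter, Finset.add_sum_erase _ (fun i => if s i = true then 1 else 0) (Finset.mem_univ a)]
  rw [key, key]
  have : ∑ i ∈ Finset.univ.erase a, (if p.flip.2 i then 1 else 0)
      = ∑ i ∈ Finset.univ.erase a, (if p.2 i then 1 else 0) := by
    apply Finset.sum_congr rfl
    intro i hi
    have : i ≠ a := Finset.ne_of_mem_erase hi
    rw [flip_snd_ne p i this]
  rw [this]
  have h2 : p.flip.2 a = !(p.2 a) := flip_snd_self p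
  rw [h2]
  cases p.2 a <;> simp [Nat.even_add_one, add_comm 1]

lemma card_double {m : ℕ} (Q : SignedPerm (m+1) → Prop) [DecidablePred Q]
    (hQ : ∀ p, Q p.flip ↔ Q p) :
    (Finset.univ.filter fun p : SignedPerm (m+1) => Q p).card
     = 2 * (Finset.univ.filter fun p : SignedPerm (m+1) => p.inD ∧ Q p).card := by
  rw [← Finset.card_filter_add_card_filter_not (s := Finset.univ.filter fun p : SignedPerm (m+1) => Q p)
    (fun p => p.inD), two_mul, Finset.filter_filter, Finset.filter_filter]
  congr 1
  · congr 1; ext p; simp [and_comm]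
  · refine Finset.card_nbij' flip flip ?_ ?_ ?_ ?_
    · intro p; simp [hQ, flip_inD]; tauto
    · intro p; simp [hQ, flip_inD]; tauto
    · intro p _; exact flip_flip p
    · intro p _; exact flip_flip p

/-- insertion of the letter of largest absolute value -/
def ins {m : ℕ} (x : SignedPerm m × Fin (m+1) × Bool) : SignedPerm (m+1) :=
  (((finSuccEquiv' x.2.1).trans (Equiv.optionCongr x.1.1)).trans (finSuccEquiv' (Fin.last m)).symm,
   Fin.insertNth x.2.1 x.2.2 x.1.2)

lemma ins_at {m : ℕ} (x : SignedPerm m × Fin (m+1) × Bool) : (ins x).1 x.2.1 = Fin.last m := by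
  simp [ins]

lemma ins_above {m : ℕ} (x : SignedPerm m × Fin (m+1) × Bool) (j : Fin m) :
    (ins x).1 (x.2.1.succAbove j) = (x.1.1 j).castSucc := by
  simp [ins]

lemma ins_snd_at {m : ℕ} (x : SignedPerm m × Fin (m+1) × Bool) : (ins x).2 x.2.1 = x.2.2 := by
  simp [ins]

lemma ins_snd_above {m : ℕ} (x : SignedPerm m × Fin (m+1) × Bool) (j : Fin m) :
    (ins x).2 (x.2.1.succAbove j) = x.1.2 j := by
  simp [ins]

lemma ins_bij {m : ℕ} : Function.Bijective (ins (m := m)) := by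
  rw [Fintype.bijective_iff_injective_and_card]
  constructor
  · rintro ⟨⟨σ, s⟩, i, e⟩ ⟨⟨σ', s'⟩, i', e'⟩ h
    have hi : i = i' := by
      have h1 := ins_at ⟨⟨σ, s⟩, i, e⟩
      have h2 := ins_at ⟨⟨σ', s'⟩, i', e'⟩
      rw [h] at h1
      exact (ins _).1.injective (h1.trans h2.symm)
    subst hi
    have hσ : σ = σ' := by
      ext j
      have h1 := ins_above ⟨⟨σ, s⟩, i, e⟩ j
      have h2 := ins_above ⟨⟨σ', s'⟩, i, e'⟩ j
      rw [h] at h1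
      have := h1.symm.trans h2
      simpa [Fin.ext_iff] using this
    subst hσ
    have h3 : Fin.insertNth i e s = Fin.insertNth (α := fun _ => Bool) i e' s' := congrArg Prod.snd h
    rw [Fin.insertNth_inj] at h3
    simp [h3]
  · simp [Fintype.card_perm, Nat.factorial_succ, pow_succ]; ring

lemma ins_word_lt {m : ℕ} (q : SignedPerm m) (i : Fin (m+1)) (e : Bool) (j : ℕ) (h : j < i.val) :
    (ins (q, i, e)).word (j+1) = q.word (j+1) := by
  have hjm : j < m := by omega
  have hj : j < m + 1 := by omega
  rw [word_succ _ j hj, word_succ _ j hjm]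
  have hs : i.succAbove ⟨j, hjm⟩ = ⟨j, hj⟩ := by
    rw [Fin.succAbove_of_castSucc_lt _ _ (by simpa [Fin.lt_def] using h)]; rfl
  have h1 := ins_above (q, i, e) ⟨j, hjm⟩
  have h2 := ins_snd_above (q, i, e) ⟨j, hjm⟩
  simp only [hs] at h1 h2
  rw [h1, h2]; simp

lemma ins_word_at {m : ℕ} (q : SignedPerm m) (i : Fin (m+1)) (e : Bool) (j : ℕ) (h : j = i.val) :
    (ins (q, i, e)).word (j+1) = (if e then -1 else 1) * ((m:ℤ) + 1) := by
  subst h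
  rw [word_succ _ _ i.2]
  have h1 := ins_at (q, i, e)
  have h2 := ins_snd_at (q, i, e)
  simp only at h1 h2
  simp only [Fin.eta]
  rw [h1, h2]; simp

lemma ins_word_gt {m : ℕ} (q : SignedPerm m) (i : Fin (m+1)) (e : Bool) (l : ℕ) (h : i.val ≤ l)
    (hjm : l < m) : (ins (q, i, e)).word (l+1+1) = q.word (l+1) := by
  have hj : l + 1 < m + 1 := by omega
  rw [word_succ _ _ hj, word_succ _ l hjm]
  have hs : i.succAbove ⟨l, hjm⟩ = ⟨l + 1, hj⟩ := by
    rw [Fin.succAbove_of_le_castSucc _ _ (by simp [Fin.le_def]; omega)]; rfl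
  have h1 := ins_above (q, i, e) ⟨l, hjm⟩
  have h2 := ins_snd_above (q, i, e) ⟨l, hjm⟩
  simp only [hs] at h1 h2
  rw [h1, h2]; simp

lemma word_bound {m : ℕ} (q : SignedPerm m) (j : ℕ) : - (m:ℤ) ≤ q.word j ∧ q.word j ≤ m := by
  by_cases h : 1 ≤ j ∧ j ≤ m
  · obtain ⟨j, rfl⟩ : ∃ i, j = i + 1 := ⟨j - 1, by omega⟩
    have := natAbs_word q j (by omega)
    omega
  · simp [word, h]

lemma entry_zero {m : ℕ} (q : SignedPerm m) : q.entry 0 = - q.word 2 := rfl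
lemma entry_succ {m : ℕ} (q : SignedPerm m) (j : ℕ) : q.entry (j+1) = q.word (j+1) := rfl

lemma des_lt {m : ℕ} (q : SignedPerm m) (i : Fin (m+1)) (e : Bool) (hi : 2 ≤ i.val) (t : ℕ)
    (ht : t < i.val) : (ins (q, i, e)).des t = q.des t := by
  have := i.2
  unfold des
  rcases t with _ | t
  · rw [entry_zero, entry_zero, entry_succ, entry_succ, ins_word_lt _ _ _ _ (by omega), ins_word_lt _ _ _ _ (by omega)]
  · rw [entry_succ, entry_succ, entry_succ, entry_succ, ins_word_lt _ _ _ _ (by omega), ins_word_lt _ _ _ _ (by omega)]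

lemma des_gt {m : ℕ} (q : SignedPerm m) (i : Fin (m+1)) (e : Bool) (t : ℕ)
    (ht : i.val < t) (htm : t < m) : (ins (q, i, e)).des (t+1) = q.des t := by
  obtain ⟨t, rfl⟩ : ∃ l, t = l + 1 := ⟨t - 1, by omega⟩
  unfold des
  rw [entry_succ, entry_succ, entry_succ, entry_succ, ins_word_gt _ _ _ _ (by omega) (by omega), ins_word_gt _ _ _ _ (by omega) (by omega)]

lemma des_at {m : ℕ} (hm : 2 ≤ m) (q : SignedPerm m) (i : Fin (m+1)) (e : Bool) :
    (ins (q, i, e)).des i = if e then 1 else 0 := by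
  have := i.2
  unfold des
  rcases hi : i.val with _ | t
  · rw [entry_zero, entry_succ, ins_word_gt _ _ _ _ (by omega) (by omega), ins_word_at _ _ _ _ (by omega)]
    have := word_bound q 1
    cases e <;> simp <;> omega
  · rw [entry_succ, entry_succ, ins_word_at _ _ _ _ (by omega), ins_word_lt _ _ _ _ (by omega)]
    have := word_bound q (t+1)
    cases e <;> simp <;> omega

lemma des_at_succ {m : ℕ} (q : SignedPerm m) (i : Fin (m+1)) (e : Bool) (hi : i.val < m) :
    (ins (q, i, e)).des (i + 1) = if e then 0 else 1 := by
  unfold des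
  rw [entry_succ, entry_succ, ins_word_gt _ _ _ _ (by omega) (by omega), ins_word_at _ _ _ _ (by omega)]
  have := word_bound q (i + 1)
  cases e <;> simp <;> omega

lemma des_one_zero {m : ℕ} (hm : 2 ≤ m) (q : SignedPerm m) (i : Fin (m+1)) (e : Bool)
    (hi : i.val = 1) : (ins (q, i, e)).des 0 = if e then 1 else 0 := by
  unfold des
  rw [entry_zero, entry_succ, ins_word_lt _ _ _ 0 (by omega), ins_word_at _ _ _ 1 (by omega)]
  have := word_bound q 1
  cases e <;> simp <;> omega

lemma d_ins {m : ℕ} (hm : 2 ≤ m) (q : SignedPerm m) (i : Fin (m+1)) (e : Bool) (hi : i.val < m)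
    (h : i.val = 0 ∨ 2 ≤ i.val) : ((ins (q, i, e)).d : ℤ) = q.d + 1 - q.des i := by
  rw [d_eq_sum, d_eq_sum]
  obtain ⟨r, hr⟩ : ∃ r, m = i.val + 1 + r := ⟨m - (i.val + 1), by omega⟩
  have e1 : Finset.range (m+1) = Finset.range (i.val + 1 + 1 + r) := by congr 1; omega
  have e2 : Finset.range m = Finset.range (i.val + 1 + r) := by congr 1
  rw [e1, e2, Finset.sum_range_add _ (i.val+1+1) r, Finset.sum_range_add _ (i.val+1) r,
    Finset.sum_range_succ, Finset.sum_range_succ, Finset.sum_range_succ, des_at hm, des_at_succ _ _ _ hi]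
  have h1 : ∑ t ∈ Finset.range i.val, (ins (q, i, e)).des t = ∑ t ∈ Finset.range i.val, q.des t := by
    apply Finset.sum_congr rfl
    intro t ht
    have := Finset.mem_range.1 ht
    exact des_lt _ _ _ (by omega) _ this
  have h2 : ∑ t ∈ Finset.range r, (ins (q, i, e)).des (i.val + 1 + 1 + t)
      = ∑ t ∈ Finset.range r, q.des (i.val + 1 + t) := by
    apply Finset.sum_congr rfl
    intro t ht
    have := Finset.mem_range.1 ht
    rw [← des_gt q i e (i.val + 1 + t) (by omega) (by omega)]
    congr 1; omega
  rw [h1, h2]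
  cases e <;> simp <;> ring

lemma d_ins_last {m : ℕ} (hm : 2 ≤ m) (q : SignedPerm m) (i : Fin (m+1)) (e : Bool) (hi : i.val = m) :
    ((ins (q, i, e)).d : ℤ) = q.d + if e then 1 else 0 := by
  rw [d_eq_sum, d_eq_sum, Finset.sum_range_succ, ← des_at hm q i e, hi]
  congr 1
  apply Finset.sum_congr rfl
  intro t ht
  have := Finset.mem_range.1 ht
  exact des_lt _ _ _ (by omega) _ (by omega)

lemma type_iff {m : ℕ} (hm : 2 ≤ m) (q : SignedPerm m) :
    q.type0Ge2 ↔ q.des 0 = 1 ∧ q.des 1 ≠ 1 := by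
  simp only [type0Ge2, mem_ddes]; simp (disch := omega)
  constructor <;> rintro ⟨_, _⟩ <;> constructor <;> omega

lemma type1_iff {m : ℕ} (hm : 2 ≤ m) (q : SignedPerm m) :
    q.type1 ↔ q.des 1 = 1 ∧ q.des 0 ≠ 1 := by
  simp only [type1, mem_ddes, ne_eq, show 0 < m by omega, show 1 < m by omega, true_and]

lemma type01_iff {m : ℕ} (hm : 2 ≤ m) (q : SignedPerm m) :
    q.type01 ↔ q.des 0 = 1 ∧ q.des 1 = 1 := by
  simp only [type01, mem_ddes, show 0 < m by omega, show 1 < m by omega, true_and]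

lemma typeGe2_iff {m : ℕ} (hm : 2 ≤ m) (q : SignedPerm m) :
    q.typeGe2 ↔ q.des 0 ≠ 1 ∧ q.des 1 ≠ 1 := by
  simp only [typeGe2, mem_ddes, ne_eq, show 0 < m by omega, show 1 < m by omega, true_and]

lemma des_cases {m : ℕ} (q : SignedPerm m) (t : ℕ) : q.des t = 0 ∨ q.des t = 1 := by
  unfold des; split_ifs <;> simp

/-- contribution of the insertion position -/
def G {m : ℕ} (q : SignedPerm m) (k : ℤ) (t : ℕ) : ℤ :=
  if t = 0 then (if (q.d : ℤ) + 1 - q.des 0 = k then 1 else 0)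
  else if t = 1 then 0
  else if t < m then (if q.type0Ge2 ∧ (q.d : ℤ) + 1 - q.des t = k then 2 else 0)
  else (if q.type0Ge2 ∧ (q.d : ℤ) = k then 1 else 0) +
    (if q.type0Ge2 ∧ (q.d : ℤ) + 1 = k then 1 else 0)

lemma G_eq {m : ℕ} (hm : 2 ≤ m) (q : SignedPerm m) (k : ℤ) (i : Fin (m+1)) :
    ∑ e : Bool, (if (ins (q, i, e)).type0Ge2 ∧ ((ins (q, i, e)).d : ℤ) = k then (1:ℤ) else 0)
      = G q k i := by
  rw [Fintype.sum_bool]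
  unfold G
  have hi := i.2
  have hT := fun e => type_iff (by omega) (ins (q, i, e))
  by_cases h0 : i.val = 0
  · have a := fun e => des_at hm q i e
    have b := fun e => des_at_succ q i e (by omega)
    have c := fun e => d_ins hm q i e (by omega) (by omega)
    rw [h0] at a b c
    simp only [zero_add] at b
    simp [hT, a, b, c, h0]
  · by_cases h1 : i.val = 1
    · have a := fun e => des_at hm q i e
      have b := fun e => des_one_zero hm q i e h1
      rw [h1] at a
      simp [hT, a, b, h1]
    · have a := fun e => des_lt q i e (by omega) 0 (by omega)
      have b := fun e => des_lt q i e (by omega) 1 (by omega)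
      have hTT : ∀ e, (ins (q, i, e)).type0Ge2 ↔ q.type0Ge2 := by
        intro e; rw [hT, type_iff hm, a, b]
      rw [if_neg h0, if_neg h1]
      by_cases h2 : i.val < m
      · have c := fun e => d_ins hm q i e (by omega) (by omega)
        simp only [hTT, c, h2]
        split_ifs <;> simp
      · have c := fun e => d_ins_last hm q i e (by omega)
        simp only [hTT, c, h2]
        simp [add_comm]

lemma G_sum {m : ℕ} (hm : 2 ≤ m) (q : SignedPerm m) (k : ℤ) :
    ∑ t ∈ Finset.range (m+1), G q k t =
      2 * k * (if q.type0Ge2 ∧ (q.d : ℤ) = k then 1 else 0)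
      + (2 * ((m:ℤ) + 1) - 2 * k - 1) * (if q.type0Ge2 ∧ (q.d : ℤ) = k - 1 then 1 else 0)
      + (if q.type1 ∧ (q.d : ℤ) = k - 1 then 1 else 0)
      + (if q.type01 ∧ (q.d : ℤ) = k then 1 else 0)
      + (if q.typeGe2 ∧ (q.d : ℤ) = k - 1 then 1 else 0) := by
  have hd := d_eq_sum q
  obtain ⟨r, rfl⟩ : ∃ r, m = r + 1 + 1 := ⟨m - 2, by omega⟩
  have g0 : G q k 0 = if (q.d : ℤ) + 1 - q.des 0 = k then 1 else 0 := by simp [G]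
  have g1 : G q k 1 = 0 := by simp [G]
  have gm : G q k (r+1+1) = (if q.type0Ge2 ∧ (q.d : ℤ) = k then 1 else 0) +
    (if q.type0Ge2 ∧ (q.d : ℤ) + 1 = k then 1 else 0) := by simp [G]
  have gt : ∀ t ∈ Finset.range r, G q k (t+1+1) =
      2 * (if q.type0Ge2 ∧ (q.d : ℤ) = k then 1 else 0) * q.des (t+1+1)
      + 2 * (if q.type0Ge2 ∧ (q.d : ℤ) + 1 = k then 1 else 0) * (1 - q.des (t+1+1)) := by
    intro t ht
    have := Finset.mem_range.1 ht
    have : G q k (t+1+1) = if q.type0Ge2 ∧ (q.d : ℤ) + 1 - q.des (t+1+1) = k then 2 else 0 := by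
      simp [G, this]
    rw [this]
    rcases des_cases q (t+1+1) with h | h <;> simp [h]
  rw [Finset.sum_range_succ, Finset.sum_range_succ', Finset.sum_range_succ', Finset.sum_congr rfl gt,
    Finset.sum_add_distrib, ← Finset.mul_sum, ← Finset.mul_sum, Finset.sum_sub_distrib]
  rw [Finset.sum_range_succ', Finset.sum_range_succ'] at hd
  simp only [zero_add] at hd ⊢
  rw [g0, g1, gm]
  set S := ∑ t ∈ Finset.range r, q.des (t+1+1)
  have hS : S = q.d - q.des 0 - q.des 1 := by linarith
  simp only [Finset.sum_const, Finset.card_range, nsmul_eq_mul, mul_one]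
  rw [hS]
  clear_value S
  clear hS gt gm g0 g1 hd
  simp only [type_iff hm, type1_iff hm, type01_iff hm, typeGe2_iff hm]
  push_cast
  rcases des_cases q 0 with h0 | h0 <;> rcases des_cases q 1 with h1 | h1 <;> rw [h0, h1] <;>
    generalize (q.d : ℤ) = D
  all_goals
    by_cases e1 : D = k
    · have e3 : ¬ (D = k - 1) := by omega
      subst e1; simp [e3] <;> ring
    · by_cases e2 : D = k - 1
      · subst e2; simp <;> ring
      · have e3 : ¬ (D + 1 = k) := by omega
        simp [e1, e2, e3]

lemma count_rec {m : ℕ} (hm : 2 ≤ m) (k : ℤ) :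
    ((Finset.univ.filter fun p : SignedPerm (m+1) => p.type0Ge2 ∧ (p.d : ℤ) = k).card : ℤ) =
      2 * k * (Finset.univ.filter fun p : SignedPerm m => p.type0Ge2 ∧ (p.d : ℤ) = k).card
      + (2 * ((m:ℤ) + 1) - 2 * k - 1) *
        (Finset.univ.filter fun p : SignedPerm m => p.type0Ge2 ∧ (p.d : ℤ) = k - 1).card
      + (Finset.univ.filter fun p : SignedPerm m => p.type1 ∧ (p.d : ℤ) = k - 1).card
      + (Finset.univ.filter fun p : SignedPerm m => p.type01 ∧ (p.d : ℤ) = k).card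
      + (Finset.univ.filter fun p : SignedPerm m => p.typeGe2 ∧ (p.d : ℤ) = k - 1).card := by
  simp only [Finset.card_filter]
  push_cast
  rw [← ins_bij.sum_comp (fun p : SignedPerm (m+1) =>
    if p.type0Ge2 ∧ (p.d : ℤ) = k then (1:ℤ) else 0), Fintype.sum_prod_type]
  simp only [Finset.mul_sum, ← Finset.sum_add_distrib]
  apply Finset.sum_congr rfl
  intro q _
  rw [Fintype.sum_prod_type]
  simp only [G_eq hm]
  rw [Fin.sum_univ_eq_sum_range (fun t => G q k t), G_sum hm]

end SignedPerm

/-- **Proposition 3.2 (iv).** Recurrence for the sub-Eulerian numbers `D_{n,k}^{0,≥2}`. -/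
theorem subEuler0Ge2_recurrence (n : ℕ) (hn : 3 ≤ n) (k : ℤ) :
    (subEuler0Ge2 n k : ℤ) =
      2 * k * subEuler0Ge2 (n - 1) k
        + (2 * (n : ℤ) - 2 * k - 1) * subEuler0Ge2 (n - 1) (k - 1)
        + subEuler1 (n - 1) (k - 1) + subEuler01 (n - 1) k + subEulerGe2 (n - 1) (k - 1) := by
  obtain ⟨m, rfl⟩ : ∃ m, n = m + 1 + 1 := ⟨n - 2, by omega⟩
  have h := SignedPerm.count_rec (m := m + 1) (by omega) k
  have hm : 1 ≤ m := by omega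
  have c1 : ∀ k : ℤ, _ = 2 * subEuler0Ge2 (m + 1 + 1) k := fun k => SignedPerm.card_double
    (m := m + 1) (fun p => p.type0Ge2 ∧ (p.d : ℤ) = k)
    (fun p => by simp only [SignedPerm.type0Ge2, SignedPerm.d, SignedPerm.flip_ddes (show 1 ≤ m + 1 by omega)])
  have c2 : ∀ k : ℤ, _ = 2 * subEuler0Ge2 (m + 1) k := fun k => SignedPerm.card_double
    (fun p => p.type0Ge2 ∧ (p.d : ℤ) = k)
    (fun p => by simp only [SignedPerm.type0Ge2, SignedPerm.d, SignedPerm.flip_ddes hm])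
  have c3 : ∀ k : ℤ, _ = 2 * subEuler1 (m + 1) k := fun k => SignedPerm.card_double
    (fun p => p.type1 ∧ (p.d : ℤ) = k)
    (fun p => by simp only [SignedPerm.type1, SignedPerm.d, SignedPerm.flip_ddes hm])
  have c4 : ∀ k : ℤ, _ = 2 * subEuler01 (m + 1) k := fun k => SignedPerm.card_double
    (fun p => p.type01 ∧ (p.d : ℤ) = k)
    (fun p => by simp only [SignedPerm.type01, SignedPerm.d, SignedPerm.flip_ddes hm])
  have c5 : ∀ k : ℤ, _ = 2 * subEulerGe2 (m + 1) k := fun k => SignedPerm.card_double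
    (fun p => p.typeGe2 ∧ (p.d : ℤ) = k)
    (fun p => by simp only [SignedPerm.typeGe2, SignedPerm.d, SignedPerm.flip_ddes hm])
  rw [c1, c2, c2, c3, c4, c5] at h
  rw [Nat.add_sub_cancel]
  push_cast at h ⊢
  linarith
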